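/- (Kusmin–Landau) There is an absolute constant C such that the following holds. Let I be an interval, and let f be a continuously differentiable real-valued function on I such that f' is monotonic on I and ‖f'(t)‖ ≥ λ > 0 for all t ∈ I, where ‖x‖ denotes the distance from x to the nearest integer. Then |Σ_{n ∈ I, n ∈ ℤ} e(f(n))| ≤ C/λ. -/

import Mathlib

open Finset

/-- `e(t) = exp(2πit)`. -/
noncomputable def eR (t : ℝ) : ℂ := Complex.exp (2 * Real.pi * Complex.I * t)

/-!
Negating `f`, or subtracting an integer multiple of `t` from it, does not change `‖∑ e(f(n))‖`, and
`f'` cannot jump over an integer because derivatives have the intermediate value property. So we may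
assume that `f'` increases and takes its values in `[λ, 1 - λ]`; the increments
`d n = f (n + 1) - f n` then do the same. Since `e(f(n)) = c n * (e(f(n)) - e(f(n + 1)))` with
`c n = (1 - e(d n))⁻¹ = 1 / 2 + (i / 2) cot (π d n)`, summation by parts bounds the sum by the size
of `c` at the two ends plus the total variation of `c`. All the `c n` lie on one vertical line and
move along it monotonically, so the variation telescopes, and the half-angle formula
`1 / sin x + cot x = cot (x / 2)` collects everything into `cot (π λ / 2) ≤ 2 / (π λ)`.
-/

open scoped Real

lemma sum_range_eq_sub_of_succ_eq_mul {K : Type*} [DivisionRing K] {u w : ℕ → K} {N : ℕ}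
    (hu : ∀ i ≤ N, u (i + 1) = u i * w i) (hw : ∀ i ≤ N, w i ≠ 1) :
    ∑ i ∈ range (N + 1), u i =
      u 0 * (1 - w 0)⁻¹ + ∑ i ∈ range N, u (i + 1) * ((1 - w (i + 1))⁻¹ - (1 - w i)⁻¹)
        - u (N + 1) * (1 - w N)⁻¹ := by
  have hterm (i : ℕ) (hi : i ≤ N) : u i = u i * (1 - w i)⁻¹ - u (i + 1) * (1 - w i)⁻¹ := by
    rw [hu i hi, ← sub_mul, ← mul_one_sub, mul_inv_cancel_right₀ (sub_ne_zero.2 (hw i hi).symm)]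
  induction N with
  | zero => simpa using hterm 0 le_rfl
  | succ N ih =>
    rw [sum_range_succ, ih (fun i hi => hu i (by omega)) (fun i hi => hw i (by omega))
      (fun i hi => hterm i (by omega)), sum_range_succ _ N]
    linear_combination (norm := noncomm_ring) hterm (N + 1) le_rfl

lemma norm_sum_range_le_of_succ_eq_mul {K : Type*} [NormedDivisionRing K] {u w : ℕ → K} {N : ℕ}
    (hu : ∀ i ≤ N, u (i + 1) = u i * w i) (hnorm : ∀ i, ‖u i‖ = 1) (hw : ∀ i ≤ N, w i ≠ 1) :
    ‖∑ i ∈ range (N + 2), u i‖ ≤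
      ‖(1 - w 0)⁻¹‖ + ‖(1 - w N)⁻¹‖ +
        ∑ i ∈ range N, ‖(1 - w (i + 1))⁻¹ - (1 - w i)⁻¹‖ := by
  have hlast : u (N + 1) - u (N + 1) * (1 - w N)⁻¹ = -(u (N + 1) * w N * (1 - w N)⁻¹) := by
    have hN : (1 - w N) * (1 - w N)⁻¹ = 1 := mul_inv_cancel₀ (sub_ne_zero.2 (hw N le_rfl).symm)
    linear_combination (norm := noncomm_ring) -u (N + 1) * hN
  have hwN : ‖w N‖ = 1 := by
    simpa only [norm_mul, hnorm, one_mul, eq_comm] using congrArg norm (hu N le_rfl)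
  have hsum : ∑ i ∈ range (N + 2), u i =
      u 0 * (1 - w 0)⁻¹ + -(u (N + 1) * w N * (1 - w N)⁻¹) +
        ∑ i ∈ range N, u (i + 1) * ((1 - w (i + 1))⁻¹ - (1 - w i)⁻¹) := by
    rw [sum_range_succ, sum_range_eq_sub_of_succ_eq_mul hu hw, ← hlast]
    abel
  rw [hsum]
  refine (norm_add₃_le).trans (add_le_add_three ?_ ?_ ?_)
  · rw [norm_mul, hnorm, one_mul]
  · rw [norm_neg, norm_mul, norm_mul, hnorm, hwN, one_mul, one_mul]
  · refine (norm_sum_le _ _).trans_eq (sum_congr rfl fun i _ => ?_)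
    rw [norm_mul, hnorm, one_mul]

lemma sin_pi_mul_pos {d : ℝ} (hd : d ∈ Set.Ioo 0 1) : 0 < Real.sin (π * d) :=
  Real.sin_pos_of_pos_of_lt_pi (mul_pos Real.pi_pos hd.1) (mul_lt_of_lt_one_right Real.pi_pos hd.2)

lemma antitoneOn_cot : AntitoneOn Real.cot (Set.Ioo 0 π) := by
  intro x hx y hy hxy
  have hsub : 0 ≤ Real.sin (y - x) :=
    Real.sin_nonneg_of_nonneg_of_le_pi (sub_nonneg.2 hxy) (by linarith [hx.1, hy.2])
  rw [Real.sin_sub] at hsub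
  rw [Real.cot_eq_cos_div_sin, Real.cot_eq_cos_div_sin,
    div_le_div_iff₀ (Real.sin_pos_of_mem_Ioo hy) (Real.sin_pos_of_mem_Ioo hx)]
  linarith

lemma cot_pi_sub (x : ℝ) : Real.cot (π - x) = -Real.cot x := by
  simp only [Real.cot_eq_cos_div_sin, Real.cos_pi_sub, Real.sin_pi_sub, neg_div]

lemma inv_sin_add_cot (x : ℝ) : (Real.sin x)⁻¹ + Real.cot x = Real.cot (x / 2) := by
  obtain ⟨y, rfl⟩ : ∃ y, x = 2 * y := ⟨x / 2, by ring⟩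
  rw [mul_div_cancel_left₀ y two_ne_zero, Real.cot_eq_cos_div_sin, Real.cot_eq_cos_div_sin,
    Real.sin_two_mul, Real.cos_two_mul]
  rcases eq_or_ne (Real.sin y) 0 with hs | hs
  · simp [hs]
  rcases eq_or_ne (Real.cos y) 0 with hc | hc
  · simp [hc]
  field_simp
  ring

lemma inv_sin_add_cot_le {x y : ℝ} (hx : 0 < x) (hxy : x ≤ y) (hy : y < 2 * π) :
    (Real.sin y)⁻¹ + Real.cot y ≤ Real.cot (x / 2) := by
  rw [inv_sin_add_cot]
  exact antitoneOn_cot ⟨by linarith, by linarith⟩ ⟨by linarith, by linarith⟩ (by linarith)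

lemma inv_sin_sub_cot_le {x y : ℝ} (hx : 0 < x) (hxy : x ≤ π - y) (hy : -π < y) :
    (Real.sin y)⁻¹ - Real.cot y ≤ Real.cot (x / 2) := by
  have h := inv_sin_add_cot_le hx hxy (by linarith)
  rwa [Real.sin_pi_sub, cot_pi_sub, ← sub_eq_add_neg] at h

lemma one_le_cot {x : ℝ} (h0 : 0 < x) (hx : x ≤ π / 4) : 1 ≤ Real.cot x := by
  have hcot : Real.cot (π / 4) = 1 := by rw [← Real.tan_inv_eq_cot, Real.tan_pi_div_four, inv_one]
  rw [← hcot]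
  exact antitoneOn_cot ⟨h0, by linarith⟩ ⟨by positivity, by linarith [Real.pi_pos]⟩ hx

lemma cot_le_inv {x : ℝ} (h0 : 0 < x) (hx : x < π / 2) : Real.cot x ≤ x⁻¹ := by
  rw [← Real.tan_inv_eq_cot]
  exact inv_anti₀ h0 (Real.le_tan h0.le hx)

lemma eR_eq_fourierChar (t : ℝ) : eR t = Real.fourierChar t := by
  rw [Real.fourierChar_apply, eR]
  congr 1
  push_cast
  ring

lemma norm_eR (t : ℝ) : ‖eR t‖ = 1 := by
  rw [eR_eq_fourierChar, Circle.norm_coe]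

lemma eR_add (s t : ℝ) : eR (s + t) = eR s * eR t := by
  simp only [eR_eq_fourierChar, AddChar.map_add_eq_mul, Circle.coe_mul]

lemma eR_neg (t : ℝ) : eR (-t) = starRingEnd ℂ (eR t) := by
  simp only [eR_eq_fourierChar, AddChar.map_neg_eq_inv, Circle.coe_inv_eq_conj]

lemma norm_sum_eR_neg {ι : Type*} (s : Finset ι) (g : ι → ℝ) :
    ‖∑ i ∈ s, eR (-g i)‖ = ‖∑ i ∈ s, eR (g i)‖ := by
  simp only [eR_neg, ← map_sum, RCLike.norm_conj]

lemma eR_sub_intCast (t : ℝ) (k : ℤ) : eR (t - k) = eR t := by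
  rw [eR, eR, Complex.exp_eq_exp_iff_exists_int]
  exact ⟨-k, by push_cast; ring⟩

lemma norm_one_sub_eR (d : ℝ) : ‖1 - eR d‖ = 2 * |Real.sin (π * d)| := by
  have h := Complex.norm_exp_I_mul_ofReal_sub_one (2 * (π * d))
  rw [mul_div_cancel_left₀ _ two_ne_zero, norm_mul, Real.norm_two, Real.norm_eq_abs] at h
  rw [norm_sub_rev, eR, ← h]
  congr 3
  push_cast
  ring

lemma norm_inv_one_sub_eR {d : ℝ} (hd : d ∈ Set.Ioo 0 1) :
    ‖(1 - eR d)⁻¹‖ = (Real.sin (π * d))⁻¹ / 2 := by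
  rw [norm_inv, norm_one_sub_eR, abs_of_pos (sin_pi_mul_pos hd), mul_inv_rev, div_eq_mul_inv]

lemma eR_ne_one {d : ℝ} (hd : d ∈ Set.Ioo 0 1) : eR d ≠ 1 := by
  have hsin := sin_pi_mul_pos hd
  rw [← sub_ne_zero, ← norm_ne_zero_iff, norm_sub_rev, norm_one_sub_eR]
  positivity

lemma inv_one_sub_eR {d : ℝ} (hd : eR d ≠ 1) :
    (1 - eR d)⁻¹ = 1 / 2 + (Real.cot (π * d) / 2 : ℝ) * Complex.I := by
  have hne : 1 - eR d ≠ 0 := sub_ne_zero.2 hd.symm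
  have hcot : (Real.cot (π * d) : ℂ) = (eR d + 1) / (Complex.I * (1 - eR d)) := by
    push_cast
    rw [Complex.cot_pi_eq_exp_ratio, eR]
  push_cast at hcot ⊢
  rw [hcot]
  field_simp
  ring

lemma norm_inv_one_sub_eR_sub {d d' : ℝ} (hd : d ∈ Set.Ioo 0 1) (hd' : d' ∈ Set.Ioo 0 1)
    (h : d ≤ d') :
    ‖(1 - eR d')⁻¹ - (1 - eR d)⁻¹‖ = Real.cot (π * d) / 2 - Real.cot (π * d') / 2 := by
  have hcot : Real.cot (π * d') ≤ Real.cot (π * d) := by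
    have hmem {t : ℝ} (ht : t ∈ Set.Ioo 0 1) : π * t ∈ Set.Ioo 0 π :=
      ⟨mul_pos Real.pi_pos ht.1, mul_lt_of_lt_one_right Real.pi_pos ht.2⟩
    exact antitoneOn_cot (hmem hd) (hmem hd') (by gcongr)
  rw [inv_one_sub_eR (eR_ne_one hd), inv_one_sub_eR (eR_ne_one hd'), add_sub_add_left_eq_sub,
    ← sub_mul, ← Complex.ofReal_sub, norm_mul, Complex.norm_I, mul_one, Complex.norm_real,
    Real.norm_eq_abs, abs_of_nonpos (by linarith), neg_sub]

theorem norm_sum_range_eR_le_cot {x : ℕ → ℝ} {N : ℕ} {lam : ℝ} (hlam : 0 < lam)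
    (hlam' : lam ≤ 1 / 2) (hx : ∀ i < N, x (i + 1) - x i ∈ Set.Icc lam (1 - lam))
    (hmono : MonotoneOn (fun i => x (i + 1) - x i) (Set.Iio N)) :
    ‖∑ i ∈ range (N + 1), eR (x i)‖ ≤ Real.cot (π * lam / 2) := by
  rcases N with _ | N
  · rw [zero_add, sum_range_one, norm_eR]
    exact one_le_cot (by positivity) (by nlinarith [Real.pi_pos])
  set d : ℕ → ℝ := fun i => x (i + 1) - x i with hd
  have hunit (i : ℕ) (hi : i ≤ N) : d i ∈ Set.Ioo 0 1 := by
    have := hx i (by omega)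
    exact ⟨by linarith [this.1], by linarith [this.2]⟩
  have hbound := norm_sum_range_le_of_succ_eq_mul (u := fun i => eR (x i)) (w := fun i => eR (d i))
    (N := N) (fun i _ => by rw [← eR_add, hd, add_sub_cancel]) (fun i => norm_eR _)
    (fun i hi => eR_ne_one (hunit i hi))
  have hvariation : ∑ i ∈ range N, ‖(1 - eR (d (i + 1)))⁻¹ - (1 - eR (d i))⁻¹‖ =
      Real.cot (π * d 0) / 2 - Real.cot (π * d N) / 2 := by
    rw [← sum_range_sub' fun i => Real.cot (π * d i) / 2]
    refine sum_congr rfl fun i hi => ?_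
    have hi : i < N := mem_range.1 hi
    exact norm_inv_one_sub_eR_sub (hunit i hi.le) (hunit (i + 1) hi)
      (hmono (Set.mem_Iio.2 (by omega)) (Set.mem_Iio.2 (by omega)) i.le_succ)
  have hfirst : (Real.sin (π * d 0))⁻¹ + Real.cot (π * d 0) ≤ Real.cot (π * lam / 2) :=
    inv_sin_add_cot_le (by positivity) (by gcongr; exact (hx 0 N.succ_pos).1)
      (by nlinarith [Real.pi_pos, (hunit 0 N.zero_le).2])
  have hlast : (Real.sin (π * d N))⁻¹ - Real.cot (π * d N) ≤ Real.cot (π * lam / 2) :=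
    inv_sin_sub_cot_le (by positivity) (by nlinarith [Real.pi_pos, (hx N N.lt_succ_self).2])
      (by nlinarith [Real.pi_pos, (hunit N le_rfl).1])
  rw [hvariation, norm_inv_one_sub_eR (hunit 0 N.zero_le), norm_inv_one_sub_eR (hunit N le_rfl)]
    at hbound
  linarith

lemma exists_hasDerivWithinAt_eq_slope {a b : ℝ} (hab : a < b) {f f' : ℝ → ℝ}
    (hf : ∀ t ∈ Set.Icc a b, HasDerivWithinAt f (f' t) (Set.Icc a b) t) :
    ∃ c ∈ Set.Ioo a b, f' c = (f b - f a) / (b - a) :=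
  exists_hasDerivAt_eq_slope f f' hab (fun t ht => (hf t ht).continuousWithinAt) fun t ht =>
    (hf t (Set.Ioo_subset_Icc_self ht)).hasDerivAt (Icc_mem_nhds ht.1 ht.2)

lemma monotoneOn_sub_of_hasDerivWithinAt {a b h : ℝ} (hh : 0 ≤ h) {f f' : ℝ → ℝ}
    (hf : ∀ t ∈ Set.Icc a b, HasDerivWithinAt f (f' t) (Set.Icc a b) t)
    (hmono : MonotoneOn f' (Set.Icc a b)) :
    MonotoneOn (fun t => f (t + h) - f t) (Set.Icc a (b - h)) := by
  have hleft : Set.Icc a (b - h) ⊆ Set.Icc a b := Set.Icc_subset_Icc_right (by linarith)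
  have hright : Set.MapsTo (· + h) (Set.Icc a (b - h)) (Set.Icc a b) := fun t ht =>
    ⟨by linarith [ht.1], by linarith [ht.2]⟩
  have hderiv (t : ℝ) (ht : t ∈ Set.Icc a (b - h)) : HasDerivWithinAt (fun t => f (t + h) - f t)
      (f' (t + h) - f' t) (Set.Icc a (b - h)) t := by
    have hshift := (hf (t + h) (hright ht)).comp t ((hasDerivWithinAt_id t _).add_const h) hright
    rw [mul_one] at hshift
    exact hshift.sub ((hf t (hleft ht)).mono hleft)
  refine monotoneOn_of_hasDerivWithinAt_nonneg (convex_Icc _ _)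
    (fun t ht => (hderiv t ht).continuousWithinAt)
    (fun t ht => (hderiv t (interior_subset ht)).mono interior_subset) fun t ht => ?_
  have ht := interior_subset ht
  exact sub_nonneg.2 (hmono (hleft ht) (hright ht) (by linarith))

lemma exists_int_subset_Icc {s : Set ℝ} (hs : s.OrdConnected) {lam : ℝ} (hlam : 0 < lam)
    (hdist : ∀ y ∈ s, lam ≤ |y - round y|) : ∃ k : ℤ, s ⊆ Set.Icc (k + lam) (k + 1 - lam) := by
  have hint (k : ℤ) : (k : ℝ) ∉ s := fun hk => by
    have := hdist k hk
    rw [round_intCast, sub_self, abs_zero] at this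
    exact this.not_gt hlam
  have hfloor {y z : ℝ} (hy : y ∈ s) (hz : z ∈ s) : ⌊z⌋ ≤ ⌊y⌋ := by
    by_contra! hlt
    exact hint ⌊z⌋ (hs.out hy hz ⟨(Int.floor_lt.1 hlt).le, Int.floor_le z⟩)
  rcases s.eq_empty_or_nonempty with rfl | ⟨y, hy⟩
  · exact ⟨0, Set.empty_subset _⟩
  refine ⟨⌊y⌋, fun z hz => ?_⟩
  have hz' := hdist z hz
  rw [abs_sub_round_eq_min, le_min_iff, Int.fract,
    (hfloor hy hz).antisymm (hfloor hz hy)] at hz'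
  exact ⟨by linarith, by linarith⟩

lemma sum_Icc_add_natCast {M : Type*} [AddCommMonoid M] (m : ℤ) (N : ℕ) (g : ℤ → M) :
    ∑ n ∈ Icc m (m + N), g n = ∑ i ∈ range (N + 1), g (m + i) := by
  rw [Int.Icc_eq_finset_map, sum_map, show (m + N + 1 - m).toNat = N + 1 by omega]
  rfl

lemma norm_sum_Icc_eR_le_cot_of_mapsTo {m : ℤ} {N : ℕ} {lam : ℝ} (hlam : 0 < lam)
    {f f' : ℝ → ℝ} (hf : ∀ t ∈ Set.Icc (m : ℝ) (m + N),
      HasDerivWithinAt f (f' t) (Set.Icc (m : ℝ) (m + N)) t)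
    (hmono : MonotoneOn f' (Set.Icc (m : ℝ) (m + N)))
    (hrange : Set.MapsTo f' (Set.Icc (m : ℝ) (m + N)) (Set.Icc lam (1 - lam))) :
    ‖∑ n ∈ Icc m (m + N), eR (f n)‖ ≤ Real.cot (π * lam / 2) := by
  have hlam' : lam ≤ 1 / 2 := by
    have hm := hrange (x := m) ⟨le_rfl, by simp⟩
    linarith [hm.1, hm.2]
  have hmem (i : ℕ) (hi : i ≤ N) : (m + i : ℝ) ∈ Set.Icc (m : ℝ) (m + N) :=
    ⟨by simp, by gcongr⟩
  rw [sum_Icc_add_natCast]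
  push_cast
  refine norm_sum_range_eR_le_cot (x := fun i => f (m + i)) hlam hlam' (fun i hi => ?_)
    fun i hi j hj hij => ?_
  · have hsub : Set.Icc (m + i : ℝ) (m + i + 1) ⊆ Set.Icc (m : ℝ) (m + N) :=
      Set.Icc_subset_Icc (hmem i hi.le).1 (by simpa [add_assoc] using (hmem (i + 1) hi).2)
    obtain ⟨c, hc, hslope⟩ := exists_hasDerivWithinAt_eq_slope (lt_add_one (m + i : ℝ))
      fun t ht => (hf t (hsub ht)).mono hsub
    rw [add_sub_cancel_left, div_one] at hslope
    push_cast
    rw [← add_assoc, ← hslope]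
    exact hrange (hsub (Set.Ioo_subset_Icc_self hc))
  · have hmem' (l : ℕ) (hl : l < N) : (m + l : ℝ) ∈ Set.Icc (m : ℝ) (m + N - 1) := by
      have := (hmem (l + 1) hl).2
      push_cast at this
      exact ⟨by simp, by linarith⟩
    push_cast
    rw [← add_assoc, ← add_assoc]
    exact monotoneOn_sub_of_hasDerivWithinAt zero_le_one hf hmono (hmem' i hi) (hmem' j hj)
      (by gcongr)

lemma norm_sum_Icc_eR_le_cot_of_monotoneOn {I : Set ℝ} (hI : I.OrdConnected) {m n : ℤ}
    (hmn : m ≤ n) (hm : (m : ℝ) ∈ I) (hn : (n : ℝ) ∈ I) {lam : ℝ} (hlam : 0 < lam) {f f' : ℝ → ℝ}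
    (hf : ∀ t ∈ I, HasDerivWithinAt f (f' t) I t) (hmono : MonotoneOn f' I)
    (hdist : ∀ t ∈ I, lam ≤ |f' t - round (f' t)|) :
    ‖∑ j ∈ Icc m n, eR (f j)‖ ≤ Real.cot (π * lam / 2) := by
  obtain ⟨N, rfl⟩ := Int.le.dest hmn
  have hsub : Set.Icc (m : ℝ) (m + N) ⊆ I := hI.out hm (by exact_mod_cast hn)
  obtain ⟨k, hk⟩ := exists_int_subset_Icc (hI.image_hasDerivWithinAt hf) hlam
    (Set.forall_mem_image.2 hdist)
  have hshift (j : ℤ) : eR (f j) = eR (f j - k * j) := by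
    rw [← Int.cast_mul, eR_sub_intCast]
  rw [sum_congr rfl fun j _ => hshift j]
  refine norm_sum_Icc_eR_le_cot_of_mapsTo (f := fun t => f t - k * t) (f' := fun t => f' t - k) hlam
    (fun t ht => ?_) (fun s hs t ht hst => sub_le_sub_right (hmono (hsub hs) (hsub ht) hst) _)
    fun t ht => ?_
  · have hlinear := (hasDerivWithinAt_id t (Set.Icc (m : ℝ) (m + N))).const_mul (k : ℝ)
    rw [mul_one] at hlinear
    exact ((hf t (hsub ht)).mono hsub).sub hlinear
  · have := hk (Set.mem_image_of_mem f' (hsub ht))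
    exact ⟨by linarith [this.1], by linarith [this.2]⟩

lemma abs_neg_sub_round_neg (y : ℝ) : |-y - round (-y)| = |y - round y| := by
  rw [← UnitAddCircle.norm_eq, ← UnitAddCircle.norm_eq, AddCircle.coe_neg, norm_neg]

theorem kusmin_landau_general {I : Set ℝ} (hI : I.OrdConnected) {m n : ℤ}
    (hmn : ∀ j ∈ Icc m n, (j : ℝ) ∈ I) {lam : ℝ} (hlam : 0 < lam) {f f' : ℝ → ℝ}
    (hf : ∀ t ∈ I, HasDerivWithinAt f (f' t) I t) (hmono : MonotoneOn f' I ∨ AntitoneOn f' I)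
    (hdist : ∀ t ∈ I, lam ≤ |f' t - round (f' t)|) :
    ‖∑ j ∈ Icc m n, eR (f j)‖ ≤ 2 / π / lam := by
  rcases lt_or_ge n m with hlt | hle
  · rw [Icc_eq_empty hlt.not_ge, sum_empty, norm_zero]
    positivity
  have hm := hmn m (left_mem_Icc.2 hle)
  have hn := hmn n (right_mem_Icc.2 hle)
  have hcot : Real.cot (π * lam / 2) ≤ 2 / π / lam := by
    have hlam' : lam ≤ 1 / 2 := (hdist m hm).trans (abs_sub_round _)
    refine (cot_le_inv (by positivity) (by nlinarith [Real.pi_pos])).trans_eq ?_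
    rw [inv_div, div_div]
  refine le_trans ?_ hcot
  rcases hmono with hmono | hanti
  · exact norm_sum_Icc_eR_le_cot_of_monotoneOn hI hle hm hn hlam hf hmono hdist
  · rw [← norm_sum_eR_neg]
    exact norm_sum_Icc_eR_le_cot_of_monotoneOn hI hle hm hn hlam (fun t ht => (hf t ht).neg)
      hanti.neg fun t ht => by simpa only [abs_neg_sub_round_neg] using hdist t ht

/-- Kusmin–Landau: if `f` is continuously differentiable with monotonic
derivative on `[a, b]`, and the derivative stays at distance `≥ λ > 0` from
the integers, then `Σ_{a ≤ n ≤ b} e(f(n)) ≪ λ⁻¹`. -/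
theorem kusmin_landau :
    ∃ C : ℝ, 0 < C ∧ ∀ a b lam : ℝ, 0 < lam → ∀ f f' : ℝ → ℝ,
      (∀ t ∈ Set.Icc a b, HasDerivAt f (f' t) t) →
      ContinuousOn f' (Set.Icc a b) →
      (MonotoneOn f' (Set.Icc a b) ∨ AntitoneOn f' (Set.Icc a b)) →
      (∀ t ∈ Set.Icc a b, lam ≤ |f' t - round (f' t)|) →
      ‖∑ n ∈ Finset.Icc ⌈a⌉ ⌊b⌋, eR (f n)‖ ≤ C / lam :=
  ⟨2 / π, by positivity, fun _ _ _ hlam _ _ hf _ hmono hdist =>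
    kusmin_landau_general Set.ordConnected_Icc
      (fun _ hj => (mem_Icc.1 hj).imp Int.ceil_le.1 Int.le_floor.1) hlam
      (fun t ht => (hf t ht).hasDerivWithinAt) hmono hdist⟩
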